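/- Let S₄₈ be the set of vectors v ∈ (ℤ/4ℤ)⁴ such that 2·v₂ = 0, 2·v₄ = 0, and not both 2·v₁ = 0 and 2·v₃ = 0 (equivalently: v₂ and v₄ lie in {0,2} and at least one of v₁, v₃ is odd); this set has 48 elements. Then S₄₈ is invariant under multiplication by the reduction of E(M) modulo 4 for every M ∈ G_Δ, and the action is transitive on S₄₈: for any v, w ∈ S₄₈ there exists M ∈ G_Δ with (E(M) mod 4)·v = w. -/

import Mathlib

open Matrix

/-- The standard symplectic matrix `J = [[0, I₂], [−I₂, 0]]` over `ℚ`. -/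
def Jmat : Matrix (Fin 4) (Fin 4) ℚ :=
  !![0, 0, 1, 0; 0, 0, 0, 1; -1, 0, 0, 0; 0, -1, 0, 0]

/-- A rational number is an integer. -/
def IsIntEntry (q : ℚ) : Prop := ∃ n : ℤ, q = n

/-- A rational number is an even integer (lies in `2ℤ`). -/
def IsEvenEntry (q : ℚ) : Prop := ∃ n : ℤ, q = 2 * n

/-- A rational number is a half-integer (`2·q ∈ ℤ`). -/
def IsHalfIntEntry (q : ℚ) : Prop := ∃ n : ℤ, 2 * q = n

/-- Membership in the paramodular group `G_Δ` for `Δ = diag(1,2)`: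
`Mᵀ·J·M = J`, together with the integrality pattern: all entries in `ℤ`,
except that `M₁₄, M₂₁, M₂₃, M₂₄, M₃₄ ∈ 2ℤ` and `2·M₄₂ ∈ ℤ`
(indices here are 0-based: `M 0 3, M 1 0, M 1 2, M 1 3, M 2 3, M 3 1`). -/
def IsParamodular (M : Matrix (Fin 4) (Fin 4) ℚ) : Prop :=
  Mᵀ * Jmat * M = Jmat ∧
  IsEvenEntry (M 0 3) ∧ IsEvenEntry (M 1 0) ∧ IsEvenEntry (M 1 2) ∧
  IsEvenEntry (M 1 3) ∧ IsEvenEntry (M 2 3) ∧ IsHalfIntEntry (M 3 1) ∧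
  ∀ i j : Fin 4,
    (i, j) ∉ ({(0, 3), (1, 0), (1, 2), (1, 3), (2, 3), (3, 1)} :
      Set (Fin 4 × Fin 4)) → IsIntEntry (M i j)

/-- The diagonal matrix `D = diag(1,1,1,2)` over `ℚ`. -/
def Dmat : Matrix (Fin 4) (Fin 4) ℚ :=
  !![1, 0, 0, 0; 0, 1, 0, 0; 0, 0, 1, 0; 0, 0, 0, 2]

/-- The conjugation `E(M) = D·M·D⁻¹`. -/
noncomputable def Emat (M : Matrix (Fin 4) (Fin 4) ℚ) : Matrix (Fin 4) (Fin 4) ℚ :=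
  Dmat * M * Dmat⁻¹

/-- Reduction modulo 2 of a rational matrix with integer entries
(entrywise, via the numerator). -/
def red2 (M : Matrix (Fin 4) (Fin 4) ℚ) : Matrix (Fin 4) (Fin 4) (ZMod 2) :=
  Matrix.of fun i j => ((M i j).num : ZMod 2)

/-- Reduction modulo 4 of a rational matrix with integer entries. -/
def red4 (M : Matrix (Fin 4) (Fin 4) ℚ) : Matrix (Fin 4) (Fin 4) (ZMod 4) :=
  Matrix.of fun i j => ((M i j).num : ZMod 4)

/-- The set `S₄₈ ⊂ (ℤ/4ℤ)⁴` of vectors with `2·v₂ = 0`, `2·v₄ = 0`, and not both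
`2·v₁ = 0` and `2·v₃ = 0` (0-based indices). -/
def S48 : Set (Fin 4 → ZMod 4) :=
  {v | 2 * v 1 = 0 ∧ 2 * v 3 = 0 ∧ ¬(2 * v 0 = 0 ∧ 2 * v 2 = 0)}

/-!
Conjugation by `D` turns `G_Δ` into the group of all integral isometries `N` of the alternating
form `K = 2 D⁻¹ J D⁻¹` of type `(2, 1)`. The parity conditions of the integrality pattern come for
free: `K N = N⁻ᵀ K` and two columns of `K` are even. In terms of `K`,
`S₄₈ = {v | 2 K v = 0, 2 v ≠ 0}`, which is visibly stable under isometries of `K`. For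
transitivity, an isometry of Heisenberg type moves the first basis vector `e` to `(1, 2s, 0, 2t)`,
and a copy of `SL₂(ℤ)` acting on the first and third coordinates then reaches every element of
`S₄₈`, since a pair of residues mod `4` with an odd member lifts to a coprime pair of integers.
-/

section Isometry

variable {n R S : Type*} [Fintype n] [DecidableEq n] [CommRing R] [CommRing S]

/-- The matrices `A` preserving the bilinear form with Gram matrix `B`. When `B` is nondegenerate
over a domain they are all invertible, so this is the isometry group of `B`; keeping it a submonoid
of matrices avoids carrying inverses around. -/
def isometryMonoid (B : Matrix n n R) : Submonoid (Matrix n n R) where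
  carrier := {A | Aᵀ * B * A = B}
  one_mem' := by simp
  mul_mem' {A A'} hA hA' :=
    calc (A * A')ᵀ * B * (A * A') = A'ᵀ * (Aᵀ * B * A) * A' := by
          simp only [transpose_mul, Matrix.mul_assoc]
      _ = B := by rw [hA, hA']

variable {A B : Matrix n n R}

theorem mem_isometryMonoid_iff : A ∈ isometryMonoid B ↔ Aᵀ * B * A = B := Iff.rfl

theorem map_mem_isometryMonoid (f : R →+* S) (hA : A ∈ isometryMonoid B) :
    A.map f ∈ isometryMonoid (B.map f) := by
  rw [mem_isometryMonoid_iff, ← transpose_map, ← Matrix.map_mul, ← Matrix.map_mul,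
    mem_isometryMonoid_iff.mp hA]

theorem map_mem_isometryMonoid_iff {f : R →+* S} (hf : Function.Injective f) :
    A.map f ∈ isometryMonoid (B.map f) ↔ A ∈ isometryMonoid B := by
  refine ⟨fun h ↦ Matrix.map_injective hf ?_, map_mem_isometryMonoid f⟩
  simpa only [Matrix.map_mul, transpose_map] using mem_isometryMonoid_iff.mp h

theorem mem_isometryMonoid_smul_iff {c : R} (hc : IsUnit c) :
    A ∈ isometryMonoid (c • B) ↔ A ∈ isometryMonoid B := by
  rw [mem_isometryMonoid_iff, mem_isometryMonoid_iff, Matrix.mul_smul, Matrix.smul_mul,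
    hc.smul_left_cancel]

theorem mul_mul_inv_mem_isometryMonoid_iff {D : Matrix n n R} (hD : IsUnit D.det) :
    D * A * D⁻¹ ∈ isometryMonoid B ↔ A ∈ isometryMonoid (Dᵀ * B * D) := by
  have hDu : IsUnit D := (isUnit_iff_isUnit_det D).mpr hD
  have hDtu : IsUnit Dᵀ := (isUnit_iff_isUnit_det Dᵀ).mpr (by rwa [det_transpose])
  have hconj : Dᵀ * ((D * A * D⁻¹)ᵀ * B * (D * A * D⁻¹)) * D = Aᵀ * (Dᵀ * B * D) * A := by
    calc _ = (D * A * (D⁻¹ * D))ᵀ * B * (D * A * (D⁻¹ * D)) := by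
          simp only [transpose_mul, Matrix.mul_assoc]
      _ = Aᵀ * (Dᵀ * B * D) * A := by
          simp only [nonsing_inv_mul D hD, mul_one, transpose_mul, Matrix.mul_assoc]
  rw [mem_isometryMonoid_iff, mem_isometryMonoid_iff, ← hconj, hDu.mul_left_inj,
    hDtu.mul_right_inj]

theorem isUnit_det_of_mem_isometryMonoid [IsDomain R] (hB : B.det ≠ 0)
    (hA : A ∈ isometryMonoid B) : IsUnit A.det := by
  have hdet : A.det * B.det * A.det = B.det := by
    simpa only [det_mul, det_transpose] using congrArg det (mem_isometryMonoid_iff.mp hA)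
  exact .of_mul_eq_one A.det (mul_right_cancel₀ hB (by linear_combination hdet))

theorem mul_eq_inv_transpose_mul (hA : A ∈ isometryMonoid B) (hdet : IsUnit A.det) :
    B * A = A⁻¹ᵀ * B := by
  calc B * A = (A * A⁻¹)ᵀ * (B * A) := by rw [mul_nonsing_inv A hdet, transpose_one, one_mul]
    _ = A⁻¹ᵀ * (Aᵀ * B * A) := by simp only [transpose_mul, Matrix.mul_assoc]
    _ = A⁻¹ᵀ * B := by rw [hA]

theorem inv_mem_isometryMonoid (hA : A ∈ isometryMonoid B) (hdet : IsUnit A.det) :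
    A⁻¹ ∈ isometryMonoid B := by
  rw [mem_isometryMonoid_iff, ← mul_eq_inv_transpose_mul hA hdet, Matrix.mul_assoc,
    mul_nonsing_inv A hdet, mul_one]

theorem smul_mulVec_mulVec_eq_zero (hA : A ∈ isometryMonoid B) (hdet : IsUnit A.det) {c : R}
    {v : n → R} (hv : c • (B *ᵥ v) = 0) : c • (B *ᵥ (A *ᵥ v)) = 0 := by
  rw [mulVec_mulVec, mul_eq_inv_transpose_mul hA hdet, ← mulVec_mulVec, ← mulVec_smul, hv,
    mulVec_zero]

theorem smul_mulVec_ne_zero (hdet : IsUnit A.det) {c : R} {v : n → R} (hv : c • v ≠ 0) :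
    c • (A *ᵥ v) ≠ 0 := by
  rw [← mulVec_smul]
  exact fun h ↦ hv (mulVec_injective_of_isUnit ((isUnit_iff_isUnit_det A).mpr hdet)
    (h.trans (mulVec_zero A).symm))

end Isometry

section ParamodularForm

variable (R : Type*) {S : Type*} [CommRing R] [CommRing S]

/-- The Gram matrix `K = 2 D⁻¹ J D⁻¹` of the alternating form of type `(2, 1)` preserved by
`E(M)`, for `M` in the paramodular group; the factor `2` makes it integral. -/
def paramodularForm : Matrix (Fin 4) (Fin 4) R :=
  !![0, 0, 2, 0; 0, 0, 0, 1; -2, 0, 0, 0; 0, -1, 0, 0]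

variable {R}

theorem paramodularForm_map (f : R →+* S) : (paramodularForm R).map f = paramodularForm S := by
  ext i j
  fin_cases i <;> fin_cases j <;> simp [paramodularForm, map_ofNat]

theorem det_paramodularForm : (paramodularForm R).det = 4 := by
  have expand : (paramodularForm R).det = 2 * 2 := by
    simp [paramodularForm, det_succ_row_zero, Fin.sum_univ_succ, Fin.succAbove]
  rw [expand, two_mul, two_add_two_eq_four]

theorem isUnit_det_of_mem_isometryMonoid_paramodularForm {N : Matrix (Fin 4) (Fin 4) ℤ}
    (hN : N ∈ isometryMonoid (paramodularForm ℤ)) : IsUnit N.det :=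
  isUnit_det_of_mem_isometryMonoid (by rw [det_paramodularForm]; norm_num) hN

theorem two_dvd_paramodularForm_apply (i : Fin 4) {j : Fin 4} (hj : j = 0 ∨ j = 2) :
    2 ∣ paramodularForm R i j := by
  rcases hj with rfl | rfl <;> fin_cases i <;> simp [paramodularForm]

theorem two_dvd_apply_of_mem_isometryMonoid_paramodularForm {N : Matrix (Fin 4) (Fin 4) R}
    (hN : N ∈ isometryMonoid (paramodularForm R)) (hdet : IsUnit N.det) {i j : Fin 4}
    (hi : i = 1 ∨ i = 3) (hj : j = 0 ∨ j = 2) : 2 ∣ N i j := by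
  have hcol (k : Fin 4) : 2 ∣ (paramodularForm R * N) k j := by
    rw [mul_eq_inv_transpose_mul hN hdet, mul_apply]
    exact Finset.dvd_sum fun l _ ↦ (two_dvd_paramodularForm_apply l hj).mul_left _
  rcases hi with rfl | rfl
  · simpa [paramodularForm, mul_apply, Fin.sum_univ_four] using hcol 3
  · simpa [paramodularForm, mul_apply, Fin.sum_univ_four] using hcol 1

end ParamodularForm

section Paramodular

variable {M : Matrix (Fin 4) (Fin 4) ℚ}

theorem Dmat_eq_diagonal : Dmat = diagonal ![1, 1, 1, 2] := by
  ext i j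
  fin_cases i <;> fin_cases j <;> rfl

theorem isUnit_det_Dmat : IsUnit Dmat.det := by
  simp [Dmat_eq_diagonal, det_diagonal, Fin.prod_univ_four]

theorem Dmat_inv : Dmat⁻¹ = diagonal (![1, 1, 1, 2])⁻¹ := by
  refine inv_eq_right_inv ?_
  rw [Dmat_eq_diagonal, diagonal_mul_diagonal, diagonal_eq_one]
  ext i
  fin_cases i <;> simp

theorem Dmat_transpose_mul_paramodularForm_mul_Dmat :
    Dmatᵀ * paramodularForm ℚ * Dmat = (2 : ℚ) • Jmat := by
  ext i j
  fin_cases i <;> fin_cases j <;>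
    simp [Dmat, Jmat, paramodularForm, mul_apply, Fin.sum_univ_four]

theorem Emat_mem_isometryMonoid_iff :
    Emat M ∈ isometryMonoid (paramodularForm ℚ) ↔ Mᵀ * Jmat * M = Jmat := by
  rw [Emat, mul_mul_inv_mem_isometryMonoid_iff isUnit_det_Dmat,
    Dmat_transpose_mul_paramodularForm_mul_Dmat, mem_isometryMonoid_smul_iff (by norm_num),
    mem_isometryMonoid_iff]

theorem Emat_apply (i j : Fin 4) :
    Emat M i j = (![1, 1, 1, 2] : Fin 4 → ℚ) i * M i j / (![1, 1, 1, 2] : Fin 4 → ℚ) j := by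
  rw [Emat, Dmat_inv, Dmat_eq_diagonal, mul_diagonal, diagonal_mul, Pi.inv_apply, div_eq_mul_inv]

theorem Emat_surjective : Function.Surjective Emat := fun A ↦
  ⟨Dmat⁻¹ * A * Dmat, by
    simp only [Emat, ← Matrix.mul_assoc, mul_nonsing_inv_cancel_right _ _ isUnit_det_Dmat,
      mul_nonsing_inv Dmat isUnit_det_Dmat, one_mul]⟩

theorem IsParamodular.exists_Emat_apply_eq_intCast (hM : IsParamodular M) (i j : Fin 4) :
    ∃ n : ℤ, Emat M i j = n := by
  obtain ⟨-, ⟨m₀₃, h₀₃⟩, ⟨m₁₀, h₁₀⟩, ⟨m₁₂, h₁₂⟩, ⟨m₁₃, h₁₃⟩, ⟨m₂₃, h₂₃⟩, ⟨m₃₁, h₃₁⟩, hInt⟩ := hM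
  rw [Emat_apply]
  by_cases hij : (i, j) ∈ ({(0, 3), (1, 0), (1, 2), (1, 3), (2, 3), (3, 1)} :
      Set (Fin 4 × Fin 4))
  · simp only [Set.mem_insert_iff, Set.mem_singleton_iff, Prod.mk.injEq] at hij
    rcases hij with ⟨rfl, rfl⟩ | ⟨rfl, rfl⟩ | ⟨rfl, rfl⟩ | ⟨rfl, rfl⟩ | ⟨rfl, rfl⟩ | ⟨rfl, rfl⟩
    · exact ⟨m₀₃, by simp [h₀₃]⟩
    · exact ⟨2 * m₁₀, by simp [h₁₀]⟩
    · exact ⟨2 * m₁₂, by simp [h₁₂]⟩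
    · exact ⟨m₁₃, by simp [h₁₃]⟩
    · exact ⟨m₂₃, by simp [h₂₃]⟩
    · exact ⟨m₃₁, by simp [h₃₁]⟩
  · obtain ⟨m, hm⟩ := hInt i j hij
    have hfactor : (![1, 1, 1, 2] : Fin 4 → ℚ) i / (![1, 1, 1, 2] : Fin 4 → ℚ) j =
        ((if i = 3 ∧ j ≠ 3 then 2 else 1 : ℤ) : ℚ) := by
      revert hij
      fin_cases i <;> fin_cases j <;> simp
    exact ⟨_, by rw [mul_div_right_comm, hfactor, hm, ← Int.cast_mul]⟩

theorem isParamodular_of_Emat_eq_map {N : Matrix (Fin 4) (Fin 4) ℤ}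
    (hJ : Mᵀ * Jmat * M = Jmat) (hEN : Emat M = N.map (Int.castRingHom ℚ))
    (hN : ∀ i j, i = 1 ∨ i = 3 → j = 0 ∨ j = 2 → 2 ∣ N i j) : IsParamodular M := by
  have happly (i j : Fin 4) := (Emat_apply (M := M) i j).symm.trans (congrFun₂ hEN i j)
  obtain ⟨n₁₀, h₁₀⟩ := hN 1 0 (by simp) (by simp)
  obtain ⟨n₁₂, h₁₂⟩ := hN 1 2 (by simp) (by simp)
  obtain ⟨n₃₀, h₃₀⟩ := hN 3 0 (by simp) (by simp)
  obtain ⟨n₃₂, h₃₂⟩ := hN 3 2 (by simp) (by simp)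
  refine ⟨hJ, ⟨N 0 3, ?_⟩, ⟨n₁₀, ?_⟩, ⟨n₁₂, ?_⟩, ⟨N 1 3, ?_⟩, ⟨N 2 3, ?_⟩, ⟨N 3 1, ?_⟩,
    fun i j hij ↦ ?_⟩
  · simpa [div_eq_iff, mul_comm] using happly 0 3
  · simpa [h₁₀] using happly 1 0
  · simpa [h₁₂] using happly 1 2
  · simpa [div_eq_iff, mul_comm] using happly 1 3
  · simpa [div_eq_iff, mul_comm] using happly 2 3
  · simpa using happly 3 1
  · obtain rfl | hi := eq_or_ne i 3
    · fin_cases j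
      · exact ⟨n₃₀, by simpa [h₃₀] using happly 3 0⟩
      · simp at hij
      · exact ⟨n₃₂, by simpa [h₃₂] using happly 3 2⟩
      · exact ⟨N 3 3, by simpa [mul_right_comm] using happly 3 3⟩
    · refine ⟨N i j, ?_⟩
      have h := happly i j
      fin_cases i <;> fin_cases j <;> simp_all

theorem isParamodular_iff : IsParamodular M ↔
    ∃ N ∈ isometryMonoid (paramodularForm ℤ), Emat M = N.map (Int.castRingHom ℚ) := by
  have hmap (N : Matrix (Fin 4) (Fin 4) ℤ) : N.map (Int.castRingHom ℚ) ∈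
      isometryMonoid (paramodularForm ℚ) ↔ N ∈ isometryMonoid (paramodularForm ℤ) := by
    rw [← paramodularForm_map (Int.castRingHom ℚ),
      map_mem_isometryMonoid_iff (RingHom.injective_int _)]
  constructor
  · intro hM
    choose N hN using hM.exists_Emat_apply_eq_intCast
    have hEN : Emat M = (of N).map (Int.castRingHom ℚ) := ext hN
    exact ⟨of N, by rw [← hmap, ← hEN, Emat_mem_isometryMonoid_iff]; exact hM.1, hEN⟩
  · rintro ⟨N, hN, hEN⟩
    have hJ : Mᵀ * Jmat * M = Jmat := by rwa [← Emat_mem_isometryMonoid_iff, hEN, hmap]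
    exact isParamodular_of_Emat_eq_map hJ hEN fun i j ↦
      two_dvd_apply_of_mem_isometryMonoid_paramodularForm hN
        (isUnit_det_of_mem_isometryMonoid_paramodularForm hN)

theorem red4_map_intCast (N : Matrix (Fin 4) (Fin 4) ℤ) :
    red4 (N.map (Int.castRingHom ℚ)) = N.map (Int.castRingHom (ZMod 4)) := by
  ext i j
  simp [red4]

theorem exists_isParamodular_red4_Emat_eq {N : Matrix (Fin 4) (Fin 4) ℤ}
    (hN : N ∈ isometryMonoid (paramodularForm ℤ)) :
    ∃ M, IsParamodular M ∧ red4 (Emat M) = N.map (Int.castRingHom (ZMod 4)) := by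
  obtain ⟨M, hM⟩ := Emat_surjective (N.map (Int.castRingHom ℚ))
  exact ⟨M, isParamodular_iff.mpr ⟨N, hN, hM⟩, by rw [hM, red4_map_intCast]⟩

theorem IsParamodular.exists_red4_Emat_eq (hM : IsParamodular M) :
    ∃ N ∈ isometryMonoid (paramodularForm ℤ),
      red4 (Emat M) = N.map (Int.castRingHom (ZMod 4)) := by
  obtain ⟨N, hN, hEN⟩ := isParamodular_iff.mp hM
  exact ⟨N, hN, by rw [hEN, red4_map_intCast]⟩

end Paramodular

section Invariance

theorem ncard_S48 : S48.ncard = 48 := by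
  have hS48 : S48 = ({v | 2 * v 1 = 0 ∧ 2 * v 3 = 0 ∧ ¬(2 * v 0 = 0 ∧ 2 * v 2 = 0)} :
      Finset (Fin 4 → ZMod 4)) := by
    simp [S48]
  rw [hS48, Set.ncard_coe_finset]
  decide +kernel

theorem mem_S48_iff {v : Fin 4 → ZMod 4} : v ∈ S48 ↔
    (2 : ZMod 4) • (paramodularForm (ZMod 4) *ᵥ v) = 0 ∧ (2 : ZMod 4) • v ≠ 0 := by
  have two_mul_two_mul (a : ZMod 4) : 2 * (2 * a) = 0 := by
    rw [← mul_assoc, show (2 * 2 : ZMod 4) = 0 from rfl, zero_mul]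
  have hform : (2 : ZMod 4) • (paramodularForm (ZMod 4) *ᵥ v) = 0 ↔ 2 * v 3 = 0 ∧ 2 * v 1 = 0 := by
    simp [paramodularForm, dotProduct, Fin.sum_univ_four, funext_iff, Fin.forall_fin_succ,
      two_mul_two_mul]
  have hsmul : (2 : ZMod 4) • v = 0 ↔
      2 * v 0 = 0 ∧ 2 * v 1 = 0 ∧ 2 * v 2 = 0 ∧ 2 * v 3 = 0 := by
    simp [funext_iff, Fin.forall_fin_succ]
  rw [ne_eq, hform, hsmul, S48, Set.mem_ofPred_eq]
  tauto

theorem mulVec_mem_S48_of_mem_isometryMonoid {A : Matrix (Fin 4) (Fin 4) (ZMod 4)}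
    (hA : A ∈ isometryMonoid (paramodularForm (ZMod 4))) (hdet : IsUnit A.det)
    {v : Fin 4 → ZMod 4} (hv : v ∈ S48) : A *ᵥ v ∈ S48 := by
  rw [mem_S48_iff] at hv ⊢
  exact ⟨smul_mulVec_mulVec_eq_zero hA hdet hv.1, smul_mulVec_ne_zero hdet hv.2⟩

theorem IsParamodular.mulVec_mem_S48 {M : Matrix (Fin 4) (Fin 4) ℚ} (hM : IsParamodular M)
    {v : Fin 4 → ZMod 4} (hv : v ∈ S48) : red4 (Emat M) *ᵥ v ∈ S48 := by
  obtain ⟨N, hN, hEN⟩ := hM.exists_red4_Emat_eq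
  have hdet : IsUnit (N.map (Int.castRingHom (ZMod 4))).det := by
    rw [← RingHom.mapMatrix_apply, ← RingHom.map_det]
    exact (isUnit_det_of_mem_isometryMonoid_paramodularForm hN).map _
  rw [hEN]
  refine mulVec_mem_S48_of_mem_isometryMonoid ?_ hdet hv
  rw [← paramodularForm_map (Int.castRingHom (ZMod 4))]
  exact map_mem_isometryMonoid _ hN

end Invariance

section Transitivity

open scoped MatrixGroups

variable {R : Type*} [CommRing R]

/-- The copy of `SL₂` acting on the first and third coordinates, a plane on which the
paramodular form is twice the determinant form. -/
def sl2Block (g : SL(2, R)) : Matrix (Fin 4) (Fin 4) R :=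
  !![g 0 0, 0, g 0 1, 0; 0, 1, 0, 0; g 1 0, 0, g 1 1, 0; 0, 0, 0, 1]

/-- The element of the Heisenberg group fixing the third basis vector which moves the first basis
vector by `2 s` and `2 t` in the second and fourth directions. -/
def heisenberg (s t : R) : Matrix (Fin 4) (Fin 4) R :=
  !![1, 0, 0, 0; 2 * s, 1, 0, 0; 0, t, 1, -s; 2 * t, 0, 0, 1]

theorem sl2Block_mem_isometryMonoid (g : SL(2, R)) :
    sl2Block g ∈ isometryMonoid (paramodularForm R) := by
  have hdet : g 0 0 * g 1 1 - g 0 1 * g 1 0 = 1 := by rw [← det_fin_two, g.det_coe]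
  rw [mem_isometryMonoid_iff]
  ext i j
  fin_cases i <;> fin_cases j <;>
    simp [sl2Block, paramodularForm, mul_apply, Fin.sum_univ_four] <;> grind

theorem heisenberg_mem_isometryMonoid (s t : R) :
    heisenberg s t ∈ isometryMonoid (paramodularForm R) := by
  rw [mem_isometryMonoid_iff]
  ext i j
  fin_cases i <;> fin_cases j <;>
    simp [heisenberg, paramodularForm, mul_apply, Fin.sum_univ_four] <;> ring

theorem sl2Block_mul_heisenberg_mulVec (g : SL(2, R)) (s t : R) :
    (sl2Block g * heisenberg s t) *ᵥ ![1, 0, 0, 0] = ![g 0 0, 2 * s, g 1 0, 2 * t] := by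
  ext i
  fin_cases i <;> simp [heisenberg, sl2Block, mulVec, dotProduct, mul_apply, Fin.sum_univ_four]

theorem exists_two_mul_intCast_eq {a : ZMod 4} (ha : 2 * a = 0) :
    ∃ s : ℤ, 2 * (s : ZMod 4) = a := by
  have h : a = 0 ∨ a = 2 := by revert a; decide
  rcases h with rfl | rfl
  · exact ⟨0, by simp⟩
  · exact ⟨1, by simp⟩

theorem exists_isUnit_intCast_eq {a : ZMod 4} (ha : 2 * a ≠ 0) :
    ∃ x : ℤ, IsUnit x ∧ (x : ZMod 4) = a := by
  have h : a = 1 ∨ a = -1 := by revert a; decide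
  rcases h with rfl | rfl
  · exact ⟨1, isUnit_one, by simp⟩
  · exact ⟨-1, isUnit_one.neg, by simp⟩

theorem exists_isCoprime_intCast_eq {a c : ZMod 4} (hac : ¬(2 * a = 0 ∧ 2 * c = 0)) :
    ∃ x z : ℤ, IsCoprime x z ∧ (x : ZMod 4) = a ∧ (z : ZMod 4) = c := by
  obtain ha | hc := not_and_or.mp hac
  · obtain ⟨x, hx, hxa⟩ := exists_isUnit_intCast_eq ha
    obtain ⟨z, hzc⟩ := ZMod.intCast_surjective c
    exact ⟨x, z, isCoprime_one_left.of_isCoprime_of_dvd_left hx.dvd, hxa, hzc⟩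
  · obtain ⟨x, hxa⟩ := ZMod.intCast_surjective a
    obtain ⟨z, hz, hzc⟩ := exists_isUnit_intCast_eq hc
    exact ⟨x, z, isCoprime_one_right.of_isCoprime_of_dvd_right hz.dvd, hxa, hzc⟩

theorem exists_mem_isometryMonoid_map_mulVec_eq {v : Fin 4 → ZMod 4} (hv : v ∈ S48) :
    ∃ N ∈ isometryMonoid (paramodularForm ℤ),
      N.map (Int.castRingHom (ZMod 4)) *ᵥ ![1, 0, 0, 0] = v := by
  obtain ⟨h₁, h₃, h₀₂⟩ := hv
  obtain ⟨x, z, hxz, hx, hz⟩ := exists_isCoprime_intCast_eq h₀₂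
  obtain ⟨g, rfl, rfl⟩ := hxz.exists_SL2_col 0
  obtain ⟨s, hs⟩ := exists_two_mul_intCast_eq h₁
  obtain ⟨t, ht⟩ := exists_two_mul_intCast_eq h₃
  refine ⟨sl2Block g * heisenberg s t,
    mul_mem (sl2Block_mem_isometryMonoid g) (heisenberg_mem_isometryMonoid s t), ?_⟩
  have hbase : (![1, 0, 0, 0] : Fin 4 → ZMod 4) = Int.castRingHom (ZMod 4) ∘ ![1, 0, 0, 0] := by
    ext i
    fin_cases i <;> simp
  ext i
  rw [hbase, ← RingHom.map_mulVec, sl2Block_mul_heisenberg_mulVec]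
  fin_cases i <;> simp [hx, hs, hz, ht]

theorem exists_mem_isometryMonoid_map_mulVec_eq_of_mem {v w : Fin 4 → ZMod 4} (hv : v ∈ S48)
    (hw : w ∈ S48) : ∃ N ∈ isometryMonoid (paramodularForm ℤ),
      N.map (Int.castRingHom (ZMod 4)) *ᵥ v = w := by
  obtain ⟨A, hA, rfl⟩ := exists_mem_isometryMonoid_map_mulVec_eq hv
  obtain ⟨B, hB, rfl⟩ := exists_mem_isometryMonoid_map_mulVec_eq hw
  have hdet := isUnit_det_of_mem_isometryMonoid_paramodularForm hA
  refine ⟨B * A⁻¹, mul_mem hB (inv_mem_isometryMonoid hA hdet), ?_⟩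
  rw [mulVec_mulVec, ← Matrix.map_mul, nonsing_inv_mul_cancel_right A B hdet]

end Transitivity

/-- `S₄₈` has 48 elements, is invariant under multiplication by `E(M) mod 4` for
every `M ∈ G_Δ`, and this action is transitive on `S₄₈`. -/
theorem S48_invariant_and_transitive :
    S48.ncard = 48 ∧
    (∀ M : Matrix (Fin 4) (Fin 4) ℚ, IsParamodular M →
      ∀ v ∈ S48, (red4 (Emat M)).mulVec v ∈ S48) ∧
    (∀ v ∈ S48, ∀ w ∈ S48, ∃ M : Matrix (Fin 4) (Fin 4) ℚ,
      IsParamodular M ∧ (red4 (Emat M)).mulVec v = w) := by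
  refine ⟨ncard_S48, fun M hM v hv ↦ hM.mulVec_mem_S48 hv, fun v hv w hw ↦ ?_⟩
  obtain ⟨N, hN, hNv⟩ := exists_mem_isometryMonoid_map_mulVec_eq_of_mem hv hw
  obtain ⟨M, hM, hMN⟩ := exists_isParamodular_red4_Emat_eq hN
  exact ⟨M, hM, by rw [hMN, hNv]⟩
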